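/- Let (I,·) be a Cartan datum with a total order on I, and let i = (j⁽¹⁾)^{n_1} ⋯ (j⁽ᵐ⁾)^{n_m} be the canonical factorization of a word i, where j⁽¹⁾ > ⋯ > j⁽ᵐ⁾ are Lyndon words and n_1,…,n_m ≥ 1. Set β_k := |j⁽ᵏ⁾| for k = 1,…,m. Then in the iterated quantum shuffle product (j⁽¹⁾)°ⁿ¹ ° (j⁽²⁾)°ⁿ² ° ⋯ ° (j⁽ᵐ⁾)°ⁿᵐ (each j⁽ᵏ⁾ shuffled with itself n_k times), the coefficient of the basis word i equals ∏_{k=1}^{m} q_{β_k}^{-n_k(n_k-1)/2} [n_k]!_{β_k}, and every other basis word occurring with nonzero coefficient is lexicographically strictly smaller than i. -/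

import Mathlib

open LaurentPolynomial

/-- A nonempty word is Lyndon if it is lexicographically strictly smaller than each of its
proper nonempty suffixes. -/
def IsLyndonWord {I : Type*} [LinearOrder I] (l : List I) : Prop :=
  l ≠ [] ∧ ∀ t s : List I, t ≠ [] → s ≠ [] → l = t ++ s → l < s

/-- Extension of the Cartan form `c` to the free abelian group `ℤ[I]`. -/
def bform {I : Type*} [Fintype I] (c : I → I → ℤ) (β γ : I →₀ ℤ) : ℤ :=
  ∑ i : I, ∑ j : I, β i * γ j * c i j

/-- The weight `|w| ∈ ℤ[I]` of a word `w`. -/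
noncomputable def wtZ {I : Type*} (w : List I) : I →₀ ℤ :=
  (w.map fun i => Finsupp.single i (1 : ℤ)).sum

/-- A shuffle permutation for two blocks, the first of length `d`: the inverse is strictly
increasing on each of the two blocks. -/
def IsShuffle2 (d : ℕ) {n : ℕ} (σ : Equiv.Perm (Fin n)) : Prop :=
  ∀ a b : Fin n, a < b →
    ((a.val < d ∧ b.val < d) ∨ (d ≤ a.val ∧ d ≤ b.val)) → σ⁻¹ a < σ⁻¹ b

/-- The statistic `e(σ)`: the sum of `u_{σ(k)} · u_{σ(m)}` over all pairs `k ≤ d < m` with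
`σ⁻¹(k) > σ⁻¹(m)` (0-indexed: `k < d ≤ m`). -/
def eStat {I : Type*} (c : I → I → ℤ) (u : List I) (d : ℕ)
    (σ : Equiv.Perm (Fin u.length)) : ℤ :=
  ∑ k : Fin u.length, ∑ m : Fin u.length,
    if k.val < d ∧ d ≤ m.val ∧ σ⁻¹ m < σ⁻¹ k then c (u.get (σ k)) (u.get (σ m)) else 0

open scoped Classical in
/-- The quantum shuffle product of two basis words, as an element of the free
`ℤ[q,q⁻¹]`-module on the set of words. -/
noncomputable def wordShuffle {I : Type*} [Fintype I] [DecidableEq I] (c : I → I → ℤ)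
    (x y : List I) : (List I) →₀ LaurentPolynomial ℤ :=
  ∑ σ : Equiv.Perm (Fin (x ++ y).length),
    if IsShuffle2 x.length σ then
      Finsupp.single (List.ofFn fun p => (x ++ y).get (σ p))
        (T (- eStat c (x ++ y) x.length σ))
    else 0

/-- The quantum shuffle product of a basis word with a general element. -/
noncomputable def shuffleF {I : Type*} [Fintype I] [DecidableEq I] (c : I → I → ℤ)
    (x : List I) (g : (List I) →₀ LaurentPolynomial ℤ) : (List I) →₀ LaurentPolynomial ℤ :=
  g.sum fun y b => b • wordShuffle c x y

/-- The iterated quantum shuffle product of a list of words. -/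
noncomputable def shuffleList {I : Type*} [Fintype I] [DecidableEq I] (c : I → I → ℤ) :
    List (List I) → (List I) →₀ LaurentPolynomial ℤ
  | [] => Finsupp.single [] 1
  | x :: xs => shuffleF c x (shuffleList c xs)

/-- The quantum integer `[n]_β = q_β^{n-1} + q_β^{n-3} + ⋯ + q_β^{-(n-1)}`,
where `q_β = q^{(β·β)/2}`. -/
noncomputable def qInt {I : Type*} [Fintype I] (c : I → I → ℤ) (β : I →₀ ℤ) (n : ℕ) :
    LaurentPolynomial ℤ :=
  ∑ t ∈ Finset.range n, T (bform c β β / 2 * ((n : ℤ) - 1 - 2 * (t : ℤ)))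

/-- The quantum factorial `[n]!_β = [n]_β [n-1]_β ⋯ [1]_β`. -/
noncomputable def qFact {I : Type*} [Fintype I] (c : I → I → ℤ) (β : I →₀ ℤ) (n : ℕ) :
    LaurentPolynomial ℤ :=
  ∏ t ∈ Finset.range n, qInt c β (t + 1)

/-!
Choose numerical letter weights `g` and a discount factor `0 < t < 1` such that the number
`∑ₚ g(wₚ) tᵖ` compares words of equal length lexicographically, and shift `g` by a constant so that
a given Lyndon word `x` gets the value `0`. Words smaller than `x`, and in particular the proper
nonempty prefixes of `x`, then have negative value, so no prefix of a word `y = xʳ z₁ z₂ ⋯` with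
`zᵢ < x` has a positive one. By Abel summation, moving letters of `x` to the right past letters of
`y` cannot raise the value above that of `xy`; so `xy` is the largest shuffle of `x` and `y`.
Equality forces `x` to stay in one piece, inserted behind a prefix of `y` of value `0`, that is,
behind `xᵏ` for some `k ≤ r`. This shuffle contributes `q^{-k β·β}` with `β = |x|`, and the sum over
`k` is an unbalanced quantum integer. Shuffling is monotone in `y`, so the factors can be multiplied
on from the right to the left.
-/

/-! ### Lyndon words and lexicographic weights -/

theorem append_lt_append_of_not_prefix {I : Type*} [LinearOrder I] {l l' : List I} (h : l < l')
    (hp : ¬ l <+: l') (u v : List I) : l ++ u < l' ++ v := by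
  induction l generalizing l' with
  | nil => simp at hp
  | cons a l ih =>
    obtain _ | ⟨b, l'⟩ := l'
    · simp at h
    · rw [List.cons_lt_cons_iff] at h
      rw [List.cons_append, List.cons_append, List.cons_lt_cons_iff]
      obtain hab | ⟨rfl, hlt⟩ := h
      · exact Or.inl hab
      · exact Or.inr ⟨rfl, ih hlt (by simpa using hp)⟩

theorem IsLyndonWord.append_lt_append_comm {I : Type*} [LinearOrder I] {x p : List I}
    (hx : IsLyndonWord x) (hp : p ≠ []) (hpx : p < x) : p ++ x < x ++ p := by
  by_cases hprefix : p <+: x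
  · obtain ⟨s, rfl⟩ := hprefix
    have hs : s ≠ [] := by
      rintro rfl
      simp at hpx
    have hps : ¬ p ++ s <+: s := fun h ↦ hp (by simpa using h.length_le)
    rw [List.append_assoc p s p]
    exact List.append_left_lt
      (by simpa using append_lt_append_of_not_prefix (hx.2 p s hp hs rfl) hps [] p)
  · exact append_lt_append_of_not_prefix hpx hprefix x p

theorem sum_mul_le_of_antitone {R : Type*} [CommRing R] [LinearOrder R] [IsStrictOrderedRing R]
    {b u : ℕ → R} {N : ℕ} (hb : ∀ k < N, ∑ i ∈ Finset.range (k + 1), b i ≤ 0)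
    (hu : ∀ k < N, u (k + 1) ≤ u k) :
    ∑ k ∈ Finset.range (N + 1), b k * u k ≤ u N * ∑ k ∈ Finset.range (N + 1), b k ∧
      (∑ k ∈ Finset.range (N + 1), b k * u k = u N * ∑ k ∈ Finset.range (N + 1), b k ↔
        ∀ k < N, ∑ i ∈ Finset.range (k + 1), b i = 0 ∨ u (k + 1) = u k) := by
  have abel := Finset.sum_range_by_parts u b (N + 1)
  simp only [smul_eq_mul, Nat.add_sub_cancel, mul_comm (u _) (b _)] at abel
  have hterm : ∀ k ∈ Finset.range N,
      0 ≤ (u (k + 1) - u k) * ∑ i ∈ Finset.range (k + 1), b i := fun k hk ↦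
    mul_nonneg_of_nonpos_of_nonpos (sub_nonpos.2 (hu k (Finset.mem_range.1 hk)))
      (hb k (Finset.mem_range.1 hk))
  rw [abel]
  refine ⟨sub_le_self _ (Finset.sum_nonneg hterm), ?_⟩
  rw [sub_eq_self, Finset.sum_eq_zero_iff_of_nonneg hterm]
  simp only [Finset.mem_range, mul_eq_zero, sub_eq_zero, or_comm]

/-- The number `g(w₀) + g(w₁) t + g(w₂) t² + ⋯` attached to a word `w`, which turns comparisons of
words into inequalities between numbers. -/
def discountedValue {I : Type*} (g : I → ℚ) (t : ℚ) : List I → ℚ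
  | [] => 0
  | a :: w => g a + t * discountedValue g t w

section DiscountedValue

variable {I : Type*} (g : I → ℚ) (t : ℚ)

theorem discountedValue_append (v w : List I) :
    discountedValue g t (v ++ w) =
      discountedValue g t v + t ^ v.length * discountedValue g t w := by
  induction v with
  | nil => simp [discountedValue]
  | cons a v ih =>
    simp only [List.cons_append, discountedValue, ih, List.length_cons, pow_succ]
    ring

theorem discountedValue_ofFn {n : ℕ} (f : Fin n → I) :
    discountedValue g t (List.ofFn f) = ∑ p : Fin n, g (f p) * t ^ (p : ℕ) := by
  induction n with
  | zero => simp [discountedValue]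
  | succ n ih =>
    simp only [List.ofFn_succ, Fin.sum_univ_succ, discountedValue, ih, Finset.mul_sum,
      Fin.val_zero, pow_zero, mul_one, Fin.val_succ, pow_succ]
    congr 1
    exact Finset.sum_congr rfl fun k _ ↦ by ring

theorem discountedValue_take (w : List I) (i : ℕ) :
    discountedValue g t (w.take i) = ∑ k ∈ Finset.range i, (w.map g).getD k 0 * t ^ k := by
  induction w generalizing i with
  | nil => simp [discountedValue]
  | cons a w ih =>
    obtain _ | i := i
    · simp [discountedValue]
    · simp only [Finset.sum_range_succ', List.take_succ_cons, List.map_cons,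
        List.getD_cons_succ, List.getD_cons_zero, discountedValue, ih, Finset.mul_sum, pow_succ,
        pow_zero, mul_one, add_comm (g a)]
      congr 1
      exact Finset.sum_congr rfl fun k _ ↦ by ring

theorem discountedValue_sub_const (μ : ℚ) (w : List I) :
    discountedValue (fun a ↦ g a - μ) t w =
      discountedValue g t w - μ * ∑ i ∈ Finset.range w.length, t ^ i := by
  induction w with
  | nil => simp [discountedValue]
  | cons a w ih =>
    simp only [discountedValue, ih, List.length_cons, Finset.sum_range_succ', pow_succ,
      ← Finset.sum_mul]
    ring

theorem discountedValue_flatten_replicate {x : List I}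
    (hx0 : discountedValue g t x = 0) (k : ℕ) :
    discountedValue g t (List.replicate k x).flatten = 0 := by
  induction k with
  | zero => rfl
  | succ k ih => simp [List.replicate_succ, discountedValue_append, hx0, ih]

end DiscountedValue

/-- Weights `g` of the letters and a discount factor `t` for which `discountedValue g t` is
strictly monotone for the lexicographic order on the words of each fixed length. -/
structure IsLexWeight {I : Type*} [LinearOrder I] (g : I → ℚ) (t : ℚ) : Prop where
  pos : 0 < t
  lt_one : t < 1
  strictMonoOn : ∀ n : ℕ, StrictMonoOn (discountedValue g t) {w | w.length = n}

section IsLexWeight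

variable {I : Type*} [LinearOrder I]

theorem discountedValue_lt_of_lt {g : I → ℚ} {t : ℚ} (ht : 0 < t)
    (hg : ∀ a b, a < b → g a + 1 ≤ g b) (hnonneg : ∀ w, 0 ≤ discountedValue g t w)
    (hlt : ∀ w, t * discountedValue g t w < 1) {v w : List I} (hlen : v.length = w.length)
    (hvw : v < w) : discountedValue g t v < discountedValue g t w := by
  induction v generalizing w with
  | nil => simp [List.length_eq_zero_iff.1 hlen.symm] at hvw
  | cons a v ih =>
    obtain _ | ⟨b, w⟩ := w
    · simp at hlen
    simp only [discountedValue]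
    obtain hab | ⟨rfl, htail⟩ := List.cons_lt_cons_iff.1 hvw
    · linarith [hg a b hab, hlt v, mul_nonneg ht.le (hnonneg w)]
    · have := ih (by simpa using hlen) htail
      gcongr

theorem exists_isLexWeight (I : Type*) [Finite I] [LinearOrder I] :
    ∃ (g : I → ℚ) (t : ℚ), IsLexWeight g t := by
  cases nonempty_fintype I
  let rank : I ≃o Fin (Fintype.card I) := (monoEquivOfFin I rfl).symm
  let g : I → ℚ := fun i ↦ (rank i : ℕ)
  let N : ℚ := Fintype.card I + 2
  have hN : 2 ≤ N := by simp [N]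
  have ht : 0 < N⁻¹ := by positivity
  have hg : ∀ a, g a + 1 ≤ N := fun a ↦ by
    have : g a ≤ Fintype.card I := Nat.cast_le.2 (rank a).2.le
    linarith
  have hstep : ∀ a b, a < b → g a + 1 ≤ g b := fun a b hab ↦ by
    have : (rank a : ℕ) + 1 ≤ rank b := rank.strictMono hab
    simpa [g] using Nat.cast_le (α := ℚ).2 this
  have hnonneg : ∀ w, 0 ≤ discountedValue g N⁻¹ w := fun w ↦ by
    induction w with
    | nil => exact le_rfl
    | cons a w ih =>
      have : 0 ≤ g a := Nat.cast_nonneg _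
      simp only [discountedValue]
      positivity
  have hlt : ∀ w, N⁻¹ * discountedValue g N⁻¹ w < 1 := fun w ↦ by
    rw [inv_mul_lt_one₀ (by positivity)]
    induction w with
    | nil => simp only [discountedValue]; linarith
    | cons a w ih =>
      have := (inv_mul_lt_one₀ (by positivity)).2 ih
      simp only [discountedValue]
      linarith [hg a]
  exact ⟨g, N⁻¹, ht, inv_lt_one_of_one_lt₀ (by linarith), fun n v hv w hw hvw ↦
    discountedValue_lt_of_lt ht hstep hnonneg hlt (hv.trans hw.symm) hvw⟩

theorem IsLexWeight.sub_const {g : I → ℚ} {t : ℚ} (h : IsLexWeight g t) (μ : ℚ) :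
    IsLexWeight (fun a ↦ g a - μ) t := by
  refine ⟨h.pos, h.lt_one, fun n v hv w hw hvw ↦ ?_⟩
  simp only [Set.mem_ofPred_eq] at hv hw
  simpa [discountedValue_sub_const, hv, hw] using h.strictMonoOn n hv hw hvw

theorem exists_isLexWeight_discountedValue_eq_zero [Finite I] {x : List I} (hx : x ≠ []) :
    ∃ (g : I → ℚ) (t : ℚ), IsLexWeight g t ∧ discountedValue g t x = 0 := by
  obtain ⟨g, t, h⟩ := exists_isLexWeight I
  have hS : 0 < ∑ i ∈ Finset.range x.length, t ^ i :=
    Finset.sum_pos (fun i _ ↦ pow_pos h.pos i) (by simpa using hx)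
  refine ⟨_, t, h.sub_const (discountedValue g t x / ∑ i ∈ Finset.range x.length, t ^ i), ?_⟩
  rw [discountedValue_sub_const, div_mul_cancel₀ _ hS.ne', sub_self]

variable {g : I → ℚ} {t : ℚ} {x : List I}

theorem IsLexWeight.discountedValue_neg_of_lt (h : IsLexWeight g t) (hx : IsLyndonWord x)
    (hx0 : discountedValue g t x = 0) {p : List I} (hp : p ≠ []) (hpx : p < x) :
    discountedValue g t p < 0 := by
  have hlt := h.strictMonoOn (p.length + x.length) (by simp) (by simp [add_comm])
    (hx.append_lt_append_comm hp hpx)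
  rw [discountedValue_append, discountedValue_append, hx0, mul_zero, add_zero, zero_add] at hlt
  have hpow : t ^ x.length < 1 := pow_lt_one₀ h.pos.le h.lt_one (by simpa using hx.1)
  by_contra! hnonneg
  exact hlt.not_ge (mul_le_of_le_one_left hnonneg hpow.le)

theorem IsLexWeight.discountedValue_neg_of_prefix_flatten (h : IsLexWeight g t)
    (hx : IsLyndonWord x) (hx0 : discountedValue g t x = 0) {zs : List (List I)}
    (hzs : ∀ z ∈ zs, z < x) {p : List I} (hp : p ≠ []) (hpzs : p <+: zs.flatten) :
    discountedValue g t p < 0 := by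
  induction zs generalizing p with
  | nil => exact absurd (List.prefix_nil.1 hpzs) hp
  | cons z zs ih =>
    rw [List.forall_mem_cons] at hzs
    obtain ⟨s, hs⟩ := hpzs
    obtain ⟨u, rfl, -⟩ | ⟨u, rfl, hu⟩ := List.append_eq_append_iff.1 hs
    · exact h.discountedValue_neg_of_lt hx hx0 hp ((not_lt.1 List.le_append_left).trans_lt hzs.1)
    · obtain rfl | hu0 := eq_or_ne u []
      · rw [List.append_nil] at hp ⊢
        exact h.discountedValue_neg_of_lt hx hx0 hp hzs.1
      have hu_neg := ih hzs.2 hu0 ⟨s, hu.symm⟩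
      obtain rfl | hz0 := eq_or_ne z []
      · exact hu_neg
      · rw [discountedValue_append]
        exact add_neg (h.discountedValue_neg_of_lt hx hx0 hz0 hzs.1)
          (mul_neg_of_pos_of_neg (pow_pos h.pos _) hu_neg)

theorem IsLexWeight.discountedValue_neg_or_eq_flatten_replicate (h : IsLexWeight g t)
    (hx : IsLyndonWord x) (hx0 : discountedValue g t x = 0) {zs : List (List I)}
    (hzs : ∀ z ∈ zs, z < x) (r : ℕ) {p : List I}
    (hp : p <+: (List.replicate r x).flatten ++ zs.flatten) :
    discountedValue g t p < 0 ∨ ∃ k ≤ r, p = (List.replicate k x).flatten := by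
  induction r generalizing p with
  | zero =>
    obtain rfl | hp0 := eq_or_ne p []
    · exact Or.inr ⟨0, le_rfl, rfl⟩
    · exact Or.inl (h.discountedValue_neg_of_prefix_flatten hx hx0 hzs hp0 (by simpa using hp))
  | succ r ih =>
    obtain ⟨s, hs⟩ := hp
    rw [List.replicate_succ, List.flatten_cons, List.append_assoc] at hs
    obtain ⟨u, hu, -⟩ | ⟨u, rfl, hu⟩ := List.append_eq_append_iff.1 hs
    · obtain rfl | hp0 := eq_or_ne p []
      · exact Or.inr ⟨0, Nat.zero_le _, rfl⟩
      obtain rfl | hpx := eq_or_ne p x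
      · exact Or.inr ⟨1, Nat.le_add_left 1 r, by simp⟩
      · have hle : p ≤ x := hu ▸ not_lt.1 List.le_append_left
        exact Or.inl (h.discountedValue_neg_of_lt hx hx0 hp0 (hle.lt_of_ne hpx))
    · obtain hneg | ⟨k, hk, rfl⟩ := ih ⟨s, hu.symm⟩
      · rw [discountedValue_append, hx0, zero_add]
        exact Or.inl (mul_neg_of_pos_of_neg (pow_pos h.pos _) hneg)
      · exact Or.inr ⟨k + 1, Nat.succ_le_succ hk, by simp [List.replicate_succ]⟩

end IsLexWeight

/-! ### Shuffle permutations and block insertions -/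

/-- The word `(u_{σ(1)}, …, u_{σ(n)})` produced from `u = (u_1, …, u_n)` by `σ`. -/
def permutedWord {I : Type*} (u : List I) (σ : Equiv.Perm (Fin u.length)) : List I :=
  List.ofFn fun p ↦ u.get (σ p)

/-- The position in which `σ` puts the `k`-th letter of a word of length `n`, that is, `σ⁻¹ k`. An
index `k ≥ n` has position `k`, so that positions increase on all of `[d, ∞)` for a shuffle
permutation `σ` whose first block has length `d`. -/
def letterPosition {n : ℕ} (σ : Equiv.Perm (Fin n)) (k : ℕ) : ℕ :=
  if h : k < n then (σ⁻¹ ⟨k, h⟩ : Fin n) else k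

theorem letterPosition_val {n : ℕ} (σ : Equiv.Perm (Fin n)) (k : Fin n) :
    letterPosition σ k = (σ⁻¹ k : Fin n) := by
  simp [letterPosition]

theorem letterPosition_lt {n : ℕ} (σ : Equiv.Perm (Fin n)) {k : ℕ} (hk : k < n) :
    letterPosition σ k < n := by
  simp [letterPosition, hk]

theorem letterPosition_self {n : ℕ} (σ : Equiv.Perm (Fin n)) : letterPosition σ n = n := by
  simp [letterPosition]

theorem IsShuffle2.letterPosition_lt_letterPosition {n d : ℕ} {σ : Equiv.Perm (Fin n)}
    (hσ : IsShuffle2 d σ) {a b : ℕ} (hab : a < b) (hblock : b < d ∨ d ≤ a) :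
    letterPosition σ a < letterPosition σ b := by
  by_cases hb : b < n
  · have ha : a < n := hab.trans hb
    simpa [letterPosition, ha, hb] using
      hσ ⟨a, ha⟩ ⟨b, hb⟩ hab (hblock.imp (fun h ↦ ⟨hab.trans h, h⟩) fun h ↦ ⟨h, h.trans hab.le⟩)
  · by_cases ha : a < n
    · have := letterPosition_lt σ ha
      simp only [letterPosition, dif_neg hb]
      exact this.trans_le (not_lt.1 hb)
    · simpa [letterPosition, ha, hb] using hab

theorem IsShuffle2.eq_of_eqOn_first_block {n d : ℕ} {σ τ : Equiv.Perm (Fin n)}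
    (hσ : IsShuffle2 d σ) (hτ : IsShuffle2 d τ) (h : ∀ k : Fin n, (k : ℕ) < d → σ⁻¹ k = τ⁻¹ k) :
    σ = τ := by
  have hmono : ∀ {ρ : Equiv.Perm (Fin n)}, IsShuffle2 d ρ →
      StrictMono fun k : ({k | (k : ℕ) < d}ᶜ : Set (Fin n)) ↦ ρ⁻¹ k := fun hρ a b hab ↦
    hρ a b hab (Or.inr ⟨not_lt.1 a.2, not_lt.1 b.2⟩)
  have hrange : ∀ ρ : Equiv.Perm (Fin n),
      (Set.range fun k : ({k | (k : ℕ) < d}ᶜ : Set (Fin n)) ↦ ρ⁻¹ k) =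
        (⇑ρ⁻¹ '' {k | (k : ℕ) < d})ᶜ := fun ρ ↦ by
    rw [← Set.image_compl_eq ρ⁻¹.bijective, Set.image_eq_range]
  have hsecond := ((hmono hσ).range_inj (hmono hτ)).1
    (by rw [hrange, hrange, Set.image_congr (s := {k : Fin n | (k : ℕ) < d}) h])
  refine inv_injective (Equiv.ext fun k ↦ ?_)
  by_cases hk : (k : ℕ) < d
  · exact h k hk
  · exact congrFun hsecond ⟨k, hk⟩

/-- The shuffle permutation of `0, …, n - 1` that moves the first block, of length `d`, as a whole
behind the first `r` entries of the second block. -/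
def blockInsertion (n d r : ℕ) (h : d + r ≤ n) : Equiv.Perm (Fin n) where
  toFun p := ⟨if (p : ℕ) < r then p + d else if (p : ℕ) < r + d then p - r else p, by
    have := p.2
    split_ifs <;> omega⟩
  invFun k := ⟨if (k : ℕ) < d then k + r else if (k : ℕ) < d + r then k - d else k, by
    have := k.2
    split_ifs <;> omega⟩
  left_inv p := by
    ext
    simp only
    split_ifs <;> omega
  right_inv k := by
    ext
    simp only
    split_ifs <;> omega

section BlockInsertion

variable {n d r : ℕ} (h : d + r ≤ n)

theorem blockInsertion_inv_val (k : Fin n) : (((blockInsertion n d r h)⁻¹ k : Fin n) : ℕ) =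
    if (k : ℕ) < d then k + r else if (k : ℕ) < d + r then k - d else k := rfl

theorem isShuffle2_blockInsertion : IsShuffle2 d (blockInsertion n d r h) := by
  intro a b hab hblock
  rw [Fin.lt_def] at hab ⊢
  rw [blockInsertion_inv_val, blockInsertion_inv_val]
  split_ifs <;> omega

theorem letterPosition_blockInsertion (k : ℕ) : letterPosition (blockInsertion n d r h) k =
    if k < d then k + r else if k < d + r then k - d else k := by
  by_cases hk : k < n
  · rw [letterPosition, dif_pos hk, blockInsertion_inv_val]
  · rw [letterPosition, dif_neg hk]
    split_ifs <;> omega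

theorem blockInsertion_injective {r' : ℕ} (h' : d + r' ≤ n) (hd : 0 < d)
    (heq : blockInsertion n d r h = blockInsertion n d r' h') : r = r' := by
  simpa [letterPosition_blockInsertion, hd] using congrArg (letterPosition · 0) heq

theorem blockInsertion_inv_lt_inv_iff {k m : Fin n} (hk : (k : ℕ) < d) (hm : d ≤ m) :
    (blockInsertion n d r h)⁻¹ m < (blockInsertion n d r h)⁻¹ k ↔ (m : ℕ) < d + r := by
  rw [Fin.lt_def, blockInsertion_inv_val, blockInsertion_inv_val]
  split_ifs <;> omega

end BlockInsertion

theorem IsShuffle2.eq_blockInsertion_iff {n d : ℕ} {σ : Equiv.Perm (Fin n)} (hσ : IsShuffle2 d σ)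
    {r : ℕ} (h : d + r ≤ n) :
    σ = blockInsertion n d r h ↔ ∀ k < d, letterPosition σ k = k + r := by
  refine ⟨?_, fun hpos ↦ ?_⟩
  · rintro rfl k hk
    rw [letterPosition_blockInsertion, if_pos hk]
  · refine hσ.eq_of_eqOn_first_block (isShuffle2_blockInsertion h) fun k hk ↦ Fin.ext ?_
    rw [← letterPosition_val, hpos k hk, blockInsertion_inv_val, if_pos hk]

theorem IsShuffle2.exists_eq_blockInsertion {n d : ℕ} {σ : Equiv.Perm (Fin n)}
    (hσ : IsShuffle2 d σ) (hd : 0 < d) (hdn : d ≤ n)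
    (hstep : ∀ k, k + 1 < d → letterPosition σ (k + 1) = letterPosition σ k + 1) :
    ∃ (r : ℕ) (h : d + r ≤ n), σ = blockInsertion n d r h := by
  have hpos : ∀ k < d, letterPosition σ k = k + letterPosition σ 0 := by
    intro k hk
    induction k with
    | zero => rw [zero_add]
    | succ k ih => rw [hstep k hk, ih (by omega)]; omega
  have hle : d + letterPosition σ 0 ≤ n := by
    have := letterPosition_lt σ (k := d - 1) (by omega)
    rw [hpos (d - 1) (by omega)] at this
    omega
  exact ⟨_, hle, (hσ.eq_blockInsertion_iff hle).2 hpos⟩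

/-! ### Values of shuffles -/

section ValueOfShuffle

variable {I : Type*} {g : I → ℚ} {t : ℚ}

theorem discountedValue_permutedWord (u : List I) (σ : Equiv.Perm (Fin u.length)) :
    discountedValue g t (permutedWord u σ) =
      ∑ k ∈ Finset.range u.length, (u.map g).getD k 0 * t ^ letterPosition σ k := by
  rw [permutedWord, discountedValue_ofFn, ← Equiv.sum_comp σ⁻¹, Finset.sum_range]
  refine Finset.sum_congr rfl fun k _ ↦ ?_
  rw [letterPosition_val, List.getD_eq_getElem _ _ (by simp), List.getElem_map]
  simp

theorem discountedValue_permutedWord_append (x y : List I)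
    (σ : Equiv.Perm (Fin (x ++ y).length)) :
    discountedValue g t (permutedWord (x ++ y) σ) =
      ∑ k ∈ Finset.range x.length, (x.map g).getD k 0 * t ^ letterPosition σ k +
      ∑ k ∈ Finset.range y.length,
        (y.map g).getD k 0 * t ^ letterPosition σ (x.length + k) := by
  rw [discountedValue_permutedWord, Finset.sum_congr (congrArg _ List.length_append)
    fun _ _ ↦ rfl, Finset.sum_range_add]
  congr 1 <;> refine Finset.sum_congr rfl fun k hk ↦ ?_
  · rw [List.map_append, List.getD_append _ _ _ _ (by simpa using hk)]
  · rw [List.map_append, List.getD_append_right _ _ _ _ (by simp)]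
    simp

theorem sum_mul_pow_position_le (ht : 0 < t) (ht1 : t < 1) {w : List I} {N : ℕ} {P : ℕ → ℕ}
    (hN : w.length ≤ N + 1) (hw : ∀ k < N, discountedValue g t (w.take (k + 1)) ≤ 0)
    (hP : ∀ k < N, P k < P (k + 1)) :
    ∑ k ∈ Finset.range (N + 1), (w.map g).getD k 0 * t ^ P k ≤
        t ^ P N / t ^ N * discountedValue g t w ∧
      (∑ k ∈ Finset.range (N + 1), (w.map g).getD k 0 * t ^ P k =
          t ^ P N / t ^ N * discountedValue g t w ↔
        ∀ k < N, discountedValue g t (w.take (k + 1)) = 0 ∨ P (k + 1) = P k + 1) := by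
  -- Abel summation applies to `t ^ P k / t ^ k`, which decreases with the delay `P k - k`.
  have hdelay : ∀ k, t ^ P (k + 1) / t ^ (k + 1) - t ^ P k / t ^ k =
      (t ^ P (k + 1) - t ^ (P k + 1)) / t ^ (k + 1) := fun k ↦ by
    field_simp
    ring
  have hle : ∀ k < N, t ^ P (k + 1) / t ^ (k + 1) ≤ t ^ P k / t ^ k := fun k hk ↦ by
    rw [← sub_nonpos, hdelay]
    exact div_nonpos_of_nonpos_of_nonneg
      (sub_nonpos.2 (pow_le_pow_of_le_one ht.le ht1.le (hP k hk))) (by positivity)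
  have heq : ∀ k, t ^ P (k + 1) / t ^ (k + 1) = t ^ P k / t ^ k ↔ P (k + 1) = P k + 1 :=
    fun k ↦ by
    rw [← sub_eq_zero, hdelay, div_eq_zero_iff, or_iff_left (by positivity), sub_eq_zero,
      (pow_right_injective₀ ht ht1.ne).eq_iff]
  have hsum : ∀ k, (w.map g).getD k 0 * t ^ P k =
      (w.map g).getD k 0 * t ^ k * (t ^ P k / t ^ k) := fun k ↦ by
    field_simp
  have htake : discountedValue g t w = discountedValue g t (w.take (N + 1)) := by
    rw [List.take_of_length_le hN]
  simp only [htake, hsum, discountedValue_take, ← heq] at hw ⊢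
  exact sum_mul_le_of_antitone hw hle

theorem discountedValue_permutedWord_le (ht : 0 < t) (ht1 : t < 1) {x y : List I} (hx : x ≠ [])
    (hx0 : discountedValue g t x = 0)
    (hx_neg : ∀ k, k + 1 < x.length → discountedValue g t (x.take (k + 1)) < 0)
    (hy : ∀ k, discountedValue g t (y.take k) ≤ 0)
    {σ : Equiv.Perm (Fin (x ++ y).length)} (hσ : IsShuffle2 x.length σ) :
    discountedValue g t (permutedWord (x ++ y) σ) ≤ discountedValue g t (x ++ y) ∧
      (discountedValue g t (permutedWord (x ++ y) σ) = discountedValue g t (x ++ y) ↔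
        (∀ k, k + 1 < x.length → letterPosition σ (k + 1) = letterPosition σ k + 1) ∧
        ∀ k < y.length, discountedValue g t (y.take (k + 1)) = 0 ∨
          letterPosition σ (x.length + (k + 1)) = letterPosition σ (x.length + k) + 1) := by
  have hd : x.length - 1 + 1 = x.length := Nat.sub_add_cancel (List.length_pos_iff.2 hx)
  obtain ⟨hX, hX_eq⟩ := sum_mul_pow_position_le (P := letterPosition σ) ht ht1 hd.ge
    (fun k hk ↦ (hx_neg k (by omega)).le)
    fun k hk ↦ hσ.letterPosition_lt_letterPosition (by omega) (Or.inl (by omega))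
  obtain ⟨hY, hY_eq⟩ := sum_mul_pow_position_le (P := fun k ↦ letterPosition σ (x.length + k))
    ht ht1 y.length.le_succ (fun k _ ↦ hy (k + 1))
    fun k _ ↦ hσ.letterPosition_lt_letterPosition (by omega) (Or.inr (by omega))
  have hlast : (y.map g).getD y.length 0 = 0 := List.getD_eq_default _ _ (by simp)
  have hscale : t ^ letterPosition σ (x.length + y.length) / t ^ y.length = t ^ x.length := by
    rw [← List.length_append, letterPosition_self, List.length_append, pow_add]
    field_simp
  rw [hd, hx0, mul_zero] at hX hX_eq
  rw [Finset.sum_range_succ, hlast, zero_mul, add_zero, hscale] at hY hY_eq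
  rw [discountedValue_permutedWord_append, discountedValue_append, hx0, zero_add, ← hY_eq]
  refine ⟨by linarith, ?_⟩
  have hX_eq' : (∀ k, k + 1 < x.length → letterPosition σ (k + 1) = letterPosition σ k + 1) ↔
      ∑ k ∈ Finset.range x.length, (x.map g).getD k 0 * t ^ letterPosition σ k = 0 := by
    rw [hX_eq]
    refine forall_congr' fun k ↦ ?_
    rw [Nat.lt_sub_iff_add_lt]
    exact forall_congr' fun hk ↦ by simp [(hx_neg k hk).ne]
  rw [hX_eq']
  constructor
  · intro h
    constructor <;> linarith
  · rintro ⟨hX_zero, hY_max⟩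
    linarith

theorem discountedValue_permutedWord_eq_iff (ht : 0 < t) (ht1 : t < 1) {x y : List I}
    (hx : x ≠ []) (hx0 : discountedValue g t x = 0)
    (hx_neg : ∀ k, k + 1 < x.length → discountedValue g t (x.take (k + 1)) < 0)
    (hy : ∀ k, discountedValue g t (y.take k) ≤ 0)
    {σ : Equiv.Perm (Fin (x ++ y).length)} (hσ : IsShuffle2 x.length σ) :
    discountedValue g t (permutedWord (x ++ y) σ) = discountedValue g t (x ++ y) ↔
      ∃ (r : ℕ) (h : x.length + r ≤ (x ++ y).length),
        discountedValue g t (y.take r) = 0 ∧ σ = blockInsertion _ x.length r h := by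
  rw [(discountedValue_permutedWord_le ht ht1 hx hx0 hx_neg hy hσ).2]
  have hlen : (x ++ y).length = x.length + y.length := List.length_append
  have hd := List.length_pos_iff.2 hx
  constructor
  · rintro ⟨hX, hY⟩
    obtain ⟨r, h, rfl⟩ := hσ.exists_eq_blockInsertion hd (by simp) hX
    refine ⟨r, h, ?_, rfl⟩
    obtain _ | r := r
    · rfl
    · refine (hY r (by omega)).resolve_right ?_
      rw [letterPosition_blockInsertion, letterPosition_blockInsertion]
      split_ifs <;> omega
  · rintro ⟨r, h, hr, rfl⟩
    simp only [letterPosition_blockInsertion]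
    refine ⟨fun k hk ↦ by split_ifs <;> omega, fun k _ ↦ ?_⟩
    obtain rfl | hkr := eq_or_ne (k + 1) r
    · exact Or.inl hr
    · right
      split_ifs <;> omega

end ValueOfShuffle

/-! ### The largest shuffle of a Lyndon word and a product of smaller ones -/

/-- The words `w` that arise as a shuffle of the words `x` and `y`. -/
def IsShuffleOf {I : Type*} (x y w : List I) : Prop :=
  ∃ σ : Equiv.Perm (Fin (x ++ y).length),
    IsShuffle2 x.length σ ∧ permutedWord (x ++ y) σ = w

section IsShuffleOf

variable {I : Type*} {x y w : List I}

theorem isShuffleOf_iff {n : ℕ} (hn : (x ++ y).length = n) :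
    IsShuffleOf x y w ↔ ∃ σ : Equiv.Perm (Fin n),
      IsShuffle2 x.length σ ∧ List.ofFn (fun p ↦ (x ++ y).get ((σ p).cast hn.symm)) = w := by
  subst hn
  rfl

theorem IsShuffleOf.length_eq (h : IsShuffleOf x y w) : w.length = (x ++ y).length := by
  obtain ⟨σ, -, rfl⟩ := h
  exact List.length_ofFn

theorem IsShuffle2.ofFn_lt_ofFn [LinearOrder I] {n d : ℕ} {σ : Equiv.Perm (Fin n)}
    (hσ : IsShuffle2 d σ) {F F' : Fin n → I} (hfirst : ∀ k : Fin n, (k : ℕ) < d → F' k = F k)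
    (hlt : List.ofFn F' < List.ofFn F) :
    List.ofFn (fun p ↦ F' (σ p)) < List.ofFn fun p ↦ F (σ p) := by
  obtain ⟨-, h⟩ | ⟨i, hi_len, _, heq, hFi⟩ := List.lt_iff_exists.1 hlt
  · simp at h
  have hi : i < n := by simpa using hi_len
  simp only [List.getElem_ofFn] at heq hFi
  have hdi : d ≤ i := not_lt.1 fun hid ↦ hFi.ne (hfirst ⟨i, hi⟩ hid)
  refine List.lt_iff_exists.2 (Or.inr ⟨(σ⁻¹ ⟨i, hi⟩ : Fin n), by simp, by simp, ?_, ?_⟩)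
  · intro p hp
    have hpn : p < n := hp.trans (Fin.is_lt _)
    -- The letters moved to the left of `i` come from the first block or stood left of `i` before.
    have hp_lt : (σ ⟨p, hpn⟩ : ℕ) < i := by
      have hσp : σ⁻¹ (σ ⟨p, hpn⟩) = ⟨p, hpn⟩ := σ.symm_apply_apply _
      by_contra! hip
      obtain hip | hip := (show ⟨i, hi⟩ ≤ σ ⟨p, hpn⟩ from hip).lt_or_eq
      · have := hσ _ _ hip (Or.inr ⟨hdi, hdi.trans hip.le⟩)
        rw [hσp] at this
        exact lt_asymm hp this
      · rw [hip, hσp] at hp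
        exact lt_irrefl _ hp
    simpa using heq _ hp_lt
  · simpa using hFi

theorem IsShuffleOf.exists_lt_of_lt [LinearOrder I] {y' : List I} (h : IsShuffleOf x y' w)
    (hlen : y'.length = y.length) (hlt : y' < y) : ∃ w', IsShuffleOf x y w' ∧ w < w' := by
  have hn : (x ++ y).length = (x ++ y').length := by simp [hlen]
  obtain ⟨σ, hσ, rfl⟩ := h
  refine ⟨_, (isShuffleOf_iff hn).2 ⟨σ, hσ, rfl⟩, hσ.ofFn_lt_ofFn
    (F' := (x ++ y').get) (F := fun p ↦ (x ++ y).get (p.cast hn.symm)) ?_ ?_⟩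
  · intro k hk
    simp [List.getElem_append_left hk]
  · have hofFn : List.ofFn (fun p ↦ (x ++ y).get (p.cast hn.symm)) = x ++ y :=
      List.ext_get (by simp [hlen]) (by simp)
    rw [hofFn, List.ofFn_get]
    exact List.append_left_lt hlt

end IsShuffleOf

theorem take_flatten_replicate_append {I : Type*} (x : List I) (zs : List (List I)) {k r : ℕ}
    (hk : k ≤ r) :
    (List.replicate r x ++ zs).flatten.take (k * x.length) = (List.replicate k x).flatten := by
  obtain ⟨s, rfl⟩ := Nat.exists_eq_add_of_le hk
  rw [List.replicate_add, List.append_assoc, List.flatten_append]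
  exact List.take_left' (by simp)

section LyndonShuffle

variable {I : Type*} [LinearOrder I] {x : List I} {zs : List (List I)} {r : ℕ} {y : List I}

theorem IsLexWeight.discountedValue_take_neg {g : I → ℚ} {t : ℚ} (h : IsLexWeight g t)
    (hx : IsLyndonWord x) (hx0 : discountedValue g t x = 0) {k : ℕ} (hk : k + 1 < x.length) :
    discountedValue g t (x.take (k + 1)) < 0 := by
  have hlen : (x.take (k + 1)).length = k + 1 := List.length_take_of_le hk.le
  refine h.discountedValue_neg_of_lt hx hx0 ?_ (lt_of_le_of_ne ?_ ?_)
  · exact List.ne_nil_of_length_eq_add_one hlen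
  · conv_rhs => rw [← List.take_append_drop (k + 1) x]
    exact not_lt.1 List.le_append_left
  · exact fun heq ↦ hk.ne (hlen.symm.trans (congrArg List.length heq))

theorem IsLexWeight.discountedValue_take_neg_or_eq {g : I → ℚ} {t : ℚ} (h : IsLexWeight g t)
    (hx : IsLyndonWord x) (hx0 : discountedValue g t x = 0) (hzs : ∀ z ∈ zs, z < x)
    (hy : y = (List.replicate r x ++ zs).flatten) (i : ℕ) :
    discountedValue g t (y.take i) < 0 ∨ ∃ k ≤ r, y.take i = (List.replicate k x).flatten := by
  rw [List.flatten_append] at hy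
  exact h.discountedValue_neg_or_eq_flatten_replicate hx hx0 hzs r (hy ▸ List.take_prefix i _)

theorem IsLexWeight.discountedValue_take_nonpos {g : I → ℚ} {t : ℚ} (h : IsLexWeight g t)
    (hx : IsLyndonWord x) (hx0 : discountedValue g t x = 0) (hzs : ∀ z ∈ zs, z < x)
    (hy : y = (List.replicate r x ++ zs).flatten) (i : ℕ) :
    discountedValue g t (y.take i) ≤ 0 := by
  obtain hneg | ⟨k, -, hk⟩ := h.discountedValue_take_neg_or_eq hx hx0 hzs hy i
  · exact hneg.le
  · rw [hk, discountedValue_flatten_replicate g t hx0]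

variable [Finite I]

theorem IsLyndonWord.isShuffleOf_le (hx : IsLyndonWord x) (hzs : ∀ z ∈ zs, z < x)
    (hy : y = (List.replicate r x ++ zs).flatten) {w : List I} (hw : IsShuffleOf x y w) :
    w ≤ x ++ y := by
  obtain ⟨g, t, h, hx0⟩ := exists_isLexWeight_discountedValue_eq_zero hx.1
  rw [← (h.strictMonoOn _).le_iff_le hw.length_eq rfl]
  obtain ⟨σ, hσ, rfl⟩ := hw
  exact (discountedValue_permutedWord_le h.pos h.lt_one hx.1 hx0
    (fun k ↦ h.discountedValue_take_neg hx hx0)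
    (h.discountedValue_take_nonpos hx hx0 hzs hy) hσ).1

theorem IsLyndonWord.permutedWord_eq_append_iff (hx : IsLyndonWord x) (hzs : ∀ z ∈ zs, z < x)
    (hy : y = (List.replicate r x ++ zs).flatten) {σ : Equiv.Perm (Fin (x ++ y).length)}
    (hσ : IsShuffle2 x.length σ) :
    permutedWord (x ++ y) σ = x ++ y ↔
      ∃ k ≤ r, ∃ h : x.length + k * x.length ≤ (x ++ y).length,
        σ = blockInsertion _ x.length (k * x.length) h := by
  obtain ⟨g, t, hg, hx0⟩ := exists_isLexWeight_discountedValue_eq_zero hx.1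
  have hlen : (permutedWord (x ++ y) σ).length = (x ++ y).length := List.length_ofFn
  rw [← (hg.strictMonoOn _).eq_iff_eq hlen rfl]
  refine (discountedValue_permutedWord_eq_iff hg.pos hg.lt_one hx.1 hx0
    (fun k ↦ hg.discountedValue_take_neg hx hx0)
    (hg.discountedValue_take_nonpos hx hx0 hzs hy) hσ).trans ⟨?_, ?_⟩
  · rintro ⟨i, h, hi0, hσi⟩
    obtain hneg | ⟨k, hk, hik⟩ := hg.discountedValue_take_neg_or_eq hx hx0 hzs hy i
    · exact absurd hi0 hneg.ne
    · rw [List.length_append] at h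
      obtain rfl : i = k * x.length := by
        simpa [List.length_take_of_le (Nat.add_le_add_iff_left.1 h)] using
          congrArg List.length hik
      exact ⟨k, hk, _, hσi⟩
  · rintro ⟨k, hk, h, hσk⟩
    refine ⟨_, h, ?_, hσk⟩
    rw [hy, take_flatten_replicate_append x zs hk, discountedValue_flatten_replicate g t hx0]

end LyndonShuffle

/-! ### Coefficients of quantum shuffles -/

theorem even_sum_sum_of_symm {I : Type*} {f : I → I → ℤ} (hsymm : ∀ i j, f i j = f j i)
    (hdiag : ∀ i, Even (f i i)) (s : Finset I) : Even (∑ i ∈ s, ∑ j ∈ s, f i j) := by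
  classical
  induction s using Finset.induction_on with
  | empty => simp
  | insert a s ha ih =>
    have hexpand : ∑ i ∈ insert a s, ∑ j ∈ insert a s, f i j =
        f a a + (∑ j ∈ s, f a j + ∑ j ∈ s, f a j) + ∑ i ∈ s, ∑ j ∈ s, f i j := by
      simp only [Finset.sum_insert ha, Finset.sum_add_distrib, hsymm _ a]
      ring
    rw [hexpand]
    exact ((hdiag a).add ⟨_, rfl⟩).add ih

section Weight

variable {I : Type*}

theorem wtZ_append (v w : List I) : wtZ (v ++ w) = wtZ v + wtZ w := by
  simp [wtZ]

theorem wtZ_flatten_replicate (x : List I) (k : ℕ) :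
    wtZ (List.replicate k x).flatten = k • wtZ x := by
  induction k with
  | zero => simp [wtZ]
  | succ k ih => rw [List.replicate_succ, List.flatten_cons, wtZ_append, ih, succ_nsmul']

variable [Fintype I] (c : I → I → ℤ)

theorem sum_wtZ_mul (f : I → ℤ) (w : List I) : ∑ i, wtZ w i * f i = (w.map f).sum := by
  classical
  induction w with
  | nil => simp [wtZ]
  | cons a w ih =>
    have hcons : wtZ (a :: w) = Finsupp.single a 1 + wtZ w := by simp [wtZ]
    simp [hcons, add_mul, Finset.sum_add_distrib, ih, Finsupp.single_apply]

theorem bform_wtZ (v w : List I) :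
    bform c (wtZ v) (wtZ w) = (v.map fun a ↦ (w.map (c a)).sum).sum := by
  rw [← sum_wtZ_mul, bform]
  refine Finset.sum_congr rfl fun i _ ↦ ?_
  rw [← sum_wtZ_mul, Finset.mul_sum]
  exact Finset.sum_congr rfl fun j _ ↦ mul_assoc _ _ _

theorem bform_nsmul_right (k : ℕ) (β γ : I →₀ ℤ) : bform c β (k • γ) = k * bform c β γ := by
  simp only [bform, Finset.mul_sum, Finsupp.smul_apply, nsmul_eq_mul]
  exact Finset.sum_congr rfl fun i _ ↦ Finset.sum_congr rfl fun j _ ↦ by ring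

theorem even_bform_self (hsymm : ∀ i j, c i j = c j i) (hdiag : ∀ i, Even (c i i))
    (β : I →₀ ℤ) : Even (bform c β β) :=
  even_sum_sum_of_symm (fun i j ↦ by rw [hsymm i j]; ring) (fun i ↦ (hdiag i).mul_left _) _

end Weight

theorem sum_get_ite_eq_sum_map_drop_take {I M : Type*} [AddCommMonoid M] (f : I → M)
    (l : List I) (a b : ℕ) :
    ∑ m : Fin l.length, (if a ≤ m ∧ m < b then f (l.get m) else 0) =
      (((l.take b).drop a).map f).sum := by
  induction l generalizing a b with
  | nil => simp
  | cons z l ih =>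
    refine (Fin.sum_univ_succ (n := l.length) _).trans ?_
    obtain _ | b := b
    · simp
    obtain _ | a := a
    · simpa using congrArg (f z + ·) (ih 0 b)
    · simpa using ih a b

theorem eStat_blockInsertion {I : Type*} [Fintype I] (c : I → I → ℤ) {x y : List I} {r : ℕ}
    {h : x.length + r ≤ (x ++ y).length}
    (hword : permutedWord (x ++ y) (blockInsertion _ x.length r h) = x ++ y) :
    eStat c (x ++ y) x.length (blockInsertion _ x.length r h) =
      bform c (wtZ x) (wtZ (y.take r)) := by
  have hget : ∀ p, (x ++ y).get (blockInsertion _ x.length r h p) = (x ++ y).get p :=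
    congrFun (List.ofFn_injective (hword.trans (List.ofFn_get _).symm))
  have hterm : ∀ k m : Fin (x ++ y).length,
      (if (k : ℕ) < x.length ∧ x.length ≤ m ∧
          (blockInsertion _ x.length r h)⁻¹ m < (blockInsertion _ x.length r h)⁻¹ k then
        c ((x ++ y).get k) ((x ++ y).get m) else 0) =
      if 0 ≤ (k : ℕ) ∧ (k : ℕ) < x.length then
        if x.length ≤ m ∧ (m : ℕ) < x.length + r then
          c ((x ++ y).get k) ((x ++ y).get m) else 0
      else 0 := fun k m ↦ by
    by_cases hk : (k : ℕ) < x.length <;> by_cases hm : x.length ≤ m <;>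
      simp only [hk, hm, blockInsertion_inv_lt_inv_iff, Nat.zero_le, true_and, false_and, if_true,
        if_false, and_false]
  have hsecond : ∀ a, ∑ m : Fin (x ++ y).length,
      (if x.length ≤ m ∧ (m : ℕ) < x.length + r then c a ((x ++ y).get m) else 0) =
        ((y.take r).map (c a)).sum := fun a ↦ by
    rw [sum_get_ite_eq_sum_map_drop_take, List.take_length_add_append, List.drop_left]
  simp only [eStat, hget, hterm, bform_wtZ]
  simp only [Finset.sum_ite_irrel, Finset.sum_const_zero, hsecond]
  rw [sum_get_ite_eq_sum_map_drop_take (fun a ↦ ((y.take r).map (c a)).sum)]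
  simp

section WordShuffle

variable {I : Type*} [Fintype I] (c : I → I → ℤ)

open scoped Classical in
theorem wordShuffle_apply [DecidableEq I] (x y w : List I) :
    wordShuffle c x y w = ∑ σ : Equiv.Perm (Fin (x ++ y).length),
      if IsShuffle2 x.length σ ∧ permutedWord (x ++ y) σ = w then
        T (-eStat c (x ++ y) x.length σ) else 0 := by
  rw [wordShuffle, Finsupp.finsetSum_apply]
  refine Finset.sum_congr rfl fun σ _ ↦ ?_
  by_cases hσ : IsShuffle2 x.length σ <;> simp [hσ, Finsupp.single_apply, permutedWord]

theorem isShuffleOf_of_wordShuffle_ne_zero [DecidableEq I] {x y w : List I}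
    (h : wordShuffle c x y w ≠ 0) : IsShuffleOf x y w := by
  rw [wordShuffle_apply] at h
  obtain ⟨σ, -, hσ⟩ := Finset.exists_ne_zero_of_sum_ne_zero h
  refine ⟨σ, ?_⟩
  by_contra hnot
  exact hσ (if_neg hnot)

theorem IsLyndonWord.wordShuffle_append [LinearOrder I] {x : List I} (hx : IsLyndonWord x)
    {zs : List (List I)} (hzs : ∀ z ∈ zs, z < x) {r : ℕ} {y : List I}
    (hy : y = (List.replicate r x ++ zs).flatten) :
    wordShuffle c x y (x ++ y) =
      ∑ k ∈ Finset.range (r + 1), T (-(k * bform c (wtZ x) (wtZ x))) := by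
  have hle : ∀ k : Fin (r + 1), x.length + k * x.length ≤ (x ++ y).length := fun k ↦ by
    have := Nat.mul_le_mul_right x.length (Fin.is_le k)
    simp only [hy, List.length_append, List.flatten_append, List.length_flatten,
      List.map_replicate, List.sum_replicate, smul_eq_mul]
    omega
  rw [wordShuffle_apply, Finset.sum_range]
  refine (Fintype.sum_of_injective
    (fun k : Fin (r + 1) ↦ blockInsertion _ x.length (k * x.length) (hle k)) ?_ _ _ ?_ ?_).symm
  · intro k k' hkk'
    have hd := List.length_pos_iff.2 hx.1
    exact Fin.ext (Nat.eq_of_mul_eq_mul_right hd (blockInsertion_injective _ _ hd hkk'))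
  · intro σ hσ
    refine if_neg fun ⟨hshuffle, hword⟩ ↦ hσ ?_
    obtain ⟨k, hk, h, rfl⟩ := (hx.permutedWord_eq_append_iff hzs hy hshuffle).1 hword
    exact ⟨⟨k, Nat.lt_succ_of_le hk⟩, rfl⟩
  · intro k
    have hshuffle := isShuffle2_blockInsertion (hle k)
    have hword := (hx.permutedWord_eq_append_iff hzs hy hshuffle).2
      ⟨k, Fin.is_le k, hle k, rfl⟩
    rw [if_pos ⟨hshuffle, hword⟩, eStat_blockInsertion c hword, hy,
      take_flatten_replicate_append x zs (Fin.is_le k), wtZ_flatten_replicate, bform_nsmul_right]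

end WordShuffle

/-! ### Leading words of iterated quantum shuffles -/

/-- The product `∏_{s < n} (1 + q^{-B} + ⋯ + q^{-sB})` of unbalanced quantum integers. -/
noncomputable def unbalancedQFact (B : ℤ) (n : ℕ) : LaurentPolynomial ℤ :=
  ∏ s ∈ Finset.range n, ∑ k ∈ Finset.range (s + 1), T (-(k * B))

theorem unbalancedQFact_bform_self {I : Type*} [Fintype I] (c : I → I → ℤ) {β : I →₀ ℤ}
    (hβ : Even (bform c β β)) (n : ℕ) :
    unbalancedQFact (bform c β β) n =
      T (-(bform c β β / 2 * (n * (n - 1) / 2 : ℕ))) * qFact c β n := by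
  obtain ⟨b, hb⟩ := hβ
  have hhalf : bform c β β / 2 = b := by omega
  rw [hhalf]
  induction n with
  | zero => simp [qFact, unbalancedQFact]
  | succ n ih =>
    have hfactor : ∑ k ∈ Finset.range (n + 1), (T (-(k * bform c β β)) : LaurentPolynomial ℤ) =
        T (-(b * n)) * qInt c β (n + 1) := by
      rw [qInt, Finset.mul_sum]
      refine Finset.sum_congr rfl fun k _ ↦ ?_
      rw [← T_add, hhalf, hb]
      congr 1
      push_cast
      ring
    rw [unbalancedQFact, Finset.prod_range_succ, ← unbalancedQFact, ih, hfactor, qFact, qFact,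
      Finset.prod_range_succ, ← Finset.sum_range_id, ← Finset.sum_range_id,
      Finset.sum_range_succ, Nat.cast_add, mul_add, neg_add, T_add]
    ring

/-- All words occurring in `G` have the length of `y` and are at most `y`. Words of different
lengths are excluded because shuffling with `x` is monotone only on words of the same length. -/
def IsSupportedBelow {I : Type*} [LinearOrder I] (G : List I →₀ LaurentPolynomial ℤ)
    (y : List I) : Prop :=
  ∀ w, G w ≠ 0 → w.length = y.length ∧ w ≤ y

theorem lt_of_mem_flatten_ofFn_replicate {α : Type*} [LT α] {m : ℕ} {j : Fin m → α}
    {n : Fin m → ℕ} {x : α} (hx : ∀ k, j k < x) {z : α}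
    (hz : z ∈ (List.ofFn fun k ↦ List.replicate (n k) (j k)).flatten) : z < x := by
  simp only [List.mem_flatten, List.mem_ofFn] at hz
  obtain ⟨_, ⟨k, rfl⟩, hzk⟩ := hz
  exact List.eq_of_mem_replicate hzk ▸ hx k

section LeadingWord

variable {I : Type*} [Fintype I]

theorem shuffleF_apply [DecidableEq I] (c : I → I → ℤ) (x : List I)
    (G : List I →₀ LaurentPolynomial ℤ) (w : List I) :
    shuffleF c x G w = ∑ y ∈ G.support, G y * wordShuffle c x y w := by
  rw [shuffleF, Finsupp.sum, Finsupp.finsetSum_apply]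
  rfl

variable [LinearOrder I] (c : I → I → ℤ) {x y : List I} {G : List I →₀ LaurentPolynomial ℤ}

theorem IsSupportedBelow.shuffleF_append (hG : IsSupportedBelow G y)
    (hmax : ∀ w, IsShuffleOf x y w → w ≤ x ++ y) :
    IsSupportedBelow (shuffleF c x G) (x ++ y) := by
  intro w hw
  rw [shuffleF_apply] at hw
  obtain ⟨y', hy', hne⟩ := Finset.exists_ne_zero_of_sum_ne_zero hw
  obtain ⟨hlen, hle⟩ := hG y' (Finsupp.mem_support_iff.1 hy')
  have hw' := isShuffleOf_of_wordShuffle_ne_zero c (right_ne_zero_of_mul hne)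
  refine ⟨by simp [hw'.length_eq, hlen], ?_⟩
  obtain hlt | rfl := hle.lt_or_eq
  · obtain ⟨v, hv, hwv⟩ := hw'.exists_lt_of_lt hlen hlt
    exact hwv.le.trans (hmax v hv)
  · exact hmax w hw'

theorem IsSupportedBelow.shuffleF_apply_append (hG : IsSupportedBelow G y)
    (hmax : ∀ w, IsShuffleOf x y w → w ≤ x ++ y) :
    shuffleF c x G (x ++ y) = G y * wordShuffle c x y (x ++ y) := by
  rw [shuffleF_apply]
  refine Finset.sum_eq_single y (fun y' hy' hne ↦ ?_) fun hy ↦ by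
    rw [Finsupp.notMem_support_iff.1 hy, zero_mul]
  obtain ⟨hlen, hle⟩ := hG y' (Finsupp.mem_support_iff.1 hy')
  by_contra h
  obtain ⟨v, hv, hlt⟩ := (isShuffleOf_of_wordShuffle_ne_zero c
    (right_ne_zero_of_mul h)).exists_lt_of_lt hlen (hle.lt_of_ne hne)
  exact hlt.not_ge (hmax v hv)

theorem isSupportedBelow_shuffleList_replicate_append (hx : IsLyndonWord x)
    {zs : List (List I)} (hzs : ∀ z ∈ zs, z < x)
    (hsupp : IsSupportedBelow (shuffleList c zs) zs.flatten) (r : ℕ) :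
    IsSupportedBelow (shuffleList c (List.replicate r x ++ zs))
      (List.replicate r x ++ zs).flatten := by
  induction r with
  | zero => exact hsupp
  | succ r ih => exact ih.shuffleF_append c fun w ↦ hx.isShuffleOf_le hzs rfl

theorem shuffleList_replicate_append_apply_flatten (hx : IsLyndonWord x)
    {zs : List (List I)} (hzs : ∀ z ∈ zs, z < x)
    (hsupp : IsSupportedBelow (shuffleList c zs) zs.flatten) (r : ℕ) :
    shuffleList c (List.replicate r x ++ zs) (List.replicate r x ++ zs).flatten =
      unbalancedQFact (bform c (wtZ x) (wtZ x)) r * shuffleList c zs zs.flatten := by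
  induction r with
  | zero => simp [unbalancedQFact]
  | succ r ih =>
    have hbelow := isSupportedBelow_shuffleList_replicate_append c hx hzs hsupp r
    rw [List.replicate_succ, List.cons_append, List.flatten_cons, shuffleList,
      hbelow.shuffleF_apply_append c fun w ↦ hx.isShuffleOf_le hzs rfl, ih,
      hx.wordShuffle_append c hzs rfl, unbalancedQFact, unbalancedQFact, Finset.prod_range_succ]
    ring

theorem isSupportedBelow_shuffleList {m : ℕ} (j : Fin m → List I) (n : Fin m → ℕ)
    (hLyn : ∀ k, IsLyndonWord (j k)) (hdec : ∀ k l, k < l → j l < j k) {ws : List (List I)}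
    (hws : ws = (List.ofFn fun k ↦ List.replicate (n k) (j k)).flatten) :
    IsSupportedBelow (shuffleList c ws) ws.flatten := by
  induction m generalizing ws with
  | zero =>
    subst hws
    simp [shuffleList, IsSupportedBelow, Finsupp.single_apply]
  | succ m ih =>
    rw [List.ofFn_succ, List.flatten_cons] at hws
    subst hws
    exact isSupportedBelow_shuffleList_replicate_append c (hLyn 0)
      (fun z ↦ lt_of_mem_flatten_ofFn_replicate fun k ↦ hdec _ _ k.succ_pos)
      (ih _ _ (fun k ↦ hLyn _) (fun k l hkl ↦ hdec _ _ (Fin.succ_lt_succ_iff.2 hkl)) rfl) (n 0)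

theorem shuffleList_apply_flatten {m : ℕ} (j : Fin m → List I) (n : Fin m → ℕ)
    (hLyn : ∀ k, IsLyndonWord (j k)) (hdec : ∀ k l, k < l → j l < j k) {ws : List (List I)}
    (hws : ws = (List.ofFn fun k ↦ List.replicate (n k) (j k)).flatten) :
    shuffleList c ws ws.flatten =
      ∏ k, unbalancedQFact (bform c (wtZ (j k)) (wtZ (j k))) (n k) := by
  induction m generalizing ws with
  | zero =>
    subst hws
    simp [shuffleList]
  | succ m ih =>
    have hLyn' := fun k : Fin m ↦ hLyn k.succ
    have hdec' := fun (k l : Fin m) hkl ↦ hdec k.succ l.succ (Fin.succ_lt_succ_iff.2 hkl)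
    rw [List.ofFn_succ, List.flatten_cons] at hws
    subst hws
    rw [shuffleList_replicate_append_apply_flatten c (hLyn 0)
      (fun z ↦ lt_of_mem_flatten_ofFn_replicate fun k ↦ hdec _ _ k.succ_pos)
      (isSupportedBelow_shuffleList c _ _ hLyn' hdec' rfl), ih _ _ hLyn' hdec' rfl,
      Fin.prod_univ_succ]

theorem top_coefficient_of_canonical_shuffle_general {m : ℕ} (j : Fin m → List I)
    (n : Fin m → ℕ) (hLyn : ∀ k, IsLyndonWord (j k)) (hdec : ∀ k l, k < l → j l < j k)
    (heven : ∀ k, Even (bform c (wtZ (j k)) (wtZ (j k)))) {ws : List (List I)}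
    (hws : ws = (List.ofFn fun k ↦ List.replicate (n k) (j k)).flatten) :
    shuffleList c ws ws.flatten =
        ∏ k, T (-(bform c (wtZ (j k)) (wtZ (j k)) / 2 * (n k * (n k - 1) / 2 : ℕ))) *
          qFact c (wtZ (j k)) (n k) ∧
      ∀ w, shuffleList c ws w ≠ 0 → w ≠ ws.flatten → w < ws.flatten := by
  refine ⟨?_, fun w hw hne ↦
    (isSupportedBelow_shuffleList c j n hLyn hdec hws w hw).2.lt_of_ne hne⟩
  rw [shuffleList_apply_flatten c j n hLyn hdec hws]
  exact Finset.prod_congr rfl fun k _ ↦ unbalancedQFact_bform_self c (heven k) (n k)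

end LeadingWord

/-- Let `i = (j⁽¹⁾)^{n_1} ⋯ (j⁽ᵐ⁾)^{n_m}` be a canonical factorization with
Lyndon words `j⁽¹⁾ > ⋯ > j⁽ᵐ⁾` and `n_k ≥ 1`, and set `β_k := |j⁽ᵏ⁾|`.  In the iterated quantum
shuffle product `(j⁽¹⁾)°ⁿ¹ ° ⋯ ° (j⁽ᵐ⁾)°ⁿᵐ` the coefficient of the word `i` equals
`∏_k q_{β_k}^{-n_k(n_k-1)/2} [n_k]!_{β_k}`, and every other word occurring with nonzero
coefficient is lexicographically strictly smaller than `i`. -/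
theorem top_coefficient_of_canonical_shuffle {I : Type*} [Fintype I] [LinearOrder I]
    (c : I → I → ℤ)
    (hsymm : ∀ i j, c i j = c j i)
    (hdiag : ∀ i, 0 < c i i ∧ Even (c i i))
    (hoff : ∀ i j, i ≠ j → 2 * c i j ≤ 0 ∧ c i i ∣ 2 * c i j)
    {m : ℕ} (j : Fin m → List I) (n : Fin m → ℕ)
    (hLyn : ∀ k, IsLyndonWord (j k))
    (hdec : ∀ k l : Fin m, k < l → j l < j k)
    (hn : ∀ k, 1 ≤ n k)
    (ws : List (List I))
    (hws : ws = (List.ofFn fun k => List.replicate (n k) (j k)).flatten)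
    (iWord : List I) (hi : iWord = ws.flatten) :
    (shuffleList c ws) iWord =
      ∏ k : Fin m,
        (T (- (bform c (wtZ (j k)) (wtZ (j k)) / 2 * ((n k * (n k - 1) / 2 : ℕ) : ℤ)))
            : LaurentPolynomial ℤ) * qFact c (wtZ (j k)) (n k) ∧
    ∀ w : List I, (shuffleList c ws) w ≠ 0 → w ≠ iWord → w < iWord := by
  subst hi
  exact top_coefficient_of_canonical_shuffle_general c j n hLyn hdec
    (fun k ↦ even_bform_self c hsymm (fun i ↦ (hdiag i).2) _) hws
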